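/- Let G₁ be an r₁-regular graph on n₁ vertices and m₁ edges, let G₂ be a graph on n₂ vertices, and let α ∈ [0,1]. (1) If r₁ = 1, then the characteristic polynomial of A_α(G₁ ∨̲ G₂), where G₁ ∨̲ G₂ is the subdivision-edge join, satisfies ψ_{A_α(G₁ ∨̲ G₂)}(x) = (x−α)·ψ_{A_α(G₂)}(x−α)·( x² − α(3+n₂)x + (α²n₂+4α−2) − (1−α)²(x−α)·Γ_{A_α(G₂)}(x−α) ). (2) If r₁ ≥ 2, then ψ_{A_α(G₁ ∨̲ G₂)}(x) = (x−2α−αn₂)^{m₁−n₁} · ψ_{A_α(G₂)}(x−αm₁) · ( x² − α(2+r₁+n₂)x + r₁(α²n₂+4α−2) − m₁(1−α)²(x−αr₁)·Γ_{A_α(G₂)}(x−αm₁) ) · ∏_{i=2}^{n₁} ( x² − α(2+r₁+n₂)x + r₁(α²n₂+3α−1) − (1−α)λ_i(A_α(G₁)) ), where λ₁(A_α(G₁)) ≥ ⋯ ≥ λ_{n₁}(A_α(G₁)) are the A_α-eigenvalues of G₁. -/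

import Mathlib

open Matrix Polynomial
open scoped Classical

noncomputable section

/-- `A_α(G) = α·D(G) + (1-α)·A(G)`, where `D(G)` is the diagonal degree matrix and
`A(G)` the adjacency matrix. -/
def Aalpha {V : Type*} [Fintype V] (G : SimpleGraph V) (α : ℝ) : Matrix V V ℝ :=
  α • Matrix.diagonal (fun v => (G.degree v : ℝ)) + (1 - α) • G.adjMatrix ℝ

/-- The `M`-coronal `Γ_M(x) = 1ᵀ (xI − M)⁻¹ 1`, i.e. the sum of the entries of
`(xI − M)⁻¹`. -/
def coronal {n : Type*} [Fintype n] (M : Matrix n n ℝ) (x : ℝ) : ℝ :=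
  ∑ i, ∑ j, (x • (1 : Matrix n n ℝ) - M)⁻¹ i j

/-- The subdivision-edge join `G₁ ∨̲ G₂`: take the subdivision graph `S(G₁)` (a new
vertex inserted in each edge of `G₁`) together with `G₂`, and join every inserted
vertex of `S(G₁)` with every vertex of `G₂`. -/
def subdivisionEdgeJoin {V₁ V₂ : Type*} (G₁ : SimpleGraph V₁) (G₂ : SimpleGraph V₂) :
    SimpleGraph (V₁ ⊕ (↥G₁.edgeSet ⊕ V₂)) :=
  SimpleGraph.fromRel fun a b =>
    match a, b with
    | Sum.inl v, Sum.inr (Sum.inl e) => v ∈ (e : Sym2 V₁)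
    | Sum.inr (Sum.inl _), Sum.inr (Sum.inr _) => True
    | Sum.inr (Sum.inr u), Sum.inr (Sum.inr w) => G₂.Adj u w
    | _, _ => False

lemma det_smul_one_sub_mul_comm {V E : Type*} [Fintype V] [Fintype E] [DecidableEq V]
    [DecidableEq E] (P : Matrix V E ℝ) (Q : Matrix E V ℝ) (t : ℝ) :
    t ^ Fintype.card E * (t • (1 : Matrix V V ℝ) - P * Q).det =
      t ^ Fintype.card V * (t • (1 : Matrix E E ℝ) - Q * P).det := by
  have h := congrArg (Polynomial.eval t) (Matrix.charpoly_mul_comm' P Q)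
  simpa [Matrix.eval_charpoly, Matrix.smul_one_eq_diagonal, Matrix.scalar_apply] using h

/-- Two continuous functions that agree off a finite set agree everywhere. -/
lemma eq_of_continuous_of_finite_compl {f g : ℝ → ℝ} (hf : Continuous f) (hg : Continuous g)
    {S : Set ℝ} (hS : S.Finite) (h : ∀ s ∉ S, f s = g s) (s : ℝ) : f s = g s :=
  congrFun (hf.ext_on (s := Sᶜ) (hS.countable.dense_compl ℝ) hg h) s

/-- The matrix all of whose entries are `1`. -/
def onesMatrix (m n : Type*) : Matrix m n ℝ := Matrix.of fun _ _ => 1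

@[simp] lemma onesMatrix_apply {m n : Type*} (i : m) (j : n) : onesMatrix m n i j = 1 := rfl

lemma det_one_sub_smul_ones {n : Type*} [Fintype n] [DecidableEq n] (s : ℝ) :
    ((1 : Matrix n n ℝ) - s • onesMatrix n n).det = 1 - s * Fintype.card n := by
  have h := det_smul_one_sub_mul_comm (onesMatrix n Unit) (s • onesMatrix Unit n) 1
  have hP : onesMatrix n Unit * (s • onesMatrix Unit n) = s • onesMatrix n n := by
    ext i j; simp [Matrix.mul_apply]
  rw [hP] at h
  simpa [Matrix.mul_apply, mul_comm] using h

/-- If all row sums of `M` equal `ρ`, a shift of `M` by a multiple of the all-ones matrix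
only moves the eigenvalue `ρ`. -/
lemma det_smul_one_sub_smul_sub_smul_ones {n : Type*} [Fintype n] [DecidableEq n]
    (M : Matrix n n ℝ) (ρ : ℝ) (hM : ∀ i, ∑ j, M i j = ρ) (μ : n → ℝ) (i₀ : n) (h₀ : μ i₀ = ρ)
    (hμ : ∀ t : ℝ, (t • (1 : Matrix n n ℝ) - M).det = ∏ i, (t - μ i)) (y β k : ℝ) :
    (y • (1 : Matrix n n ℝ) - β • M - k • onesMatrix n n).det =
      (y - β * ρ - k * Fintype.card n) * ∏ i ∈ Finset.univ.filter (· ≠ i₀), (y - β * μ i) := by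
  have hscale : ∀ t : ℝ, (t • (1 : Matrix n n ℝ) - β • M).det = ∏ i, (t - β * μ i) := by
    intro t
    rcases eq_or_ne β 0 with rfl | hβ
    · simp
    · have : t • (1 : Matrix n n ℝ) - β • M = β • ((t / β) • (1 : Matrix n n ℝ) - M) := by
        rw [smul_sub, smul_smul, mul_div_cancel₀ _ hβ]
      rw [this, Matrix.det_smul, hμ, Fintype.card, ← Finset.prod_const, ← Finset.prod_mul_distrib]
      refine Finset.prod_congr rfl fun i _ => ?_
      field_simp
  refine eq_of_continuous_of_finite_compl
    (f := fun y => (y • (1 : Matrix n n ℝ) - β • M - k • onesMatrix n n).det)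
    (g := fun y => (y - β * ρ - k * Fintype.card n) *
      ∏ i ∈ Finset.univ.filter (· ≠ i₀), (y - β * μ i))
    (by fun_prop) (by fun_prop) (Set.finite_singleton (β * ρ)) (fun t ht => ?_) y
  have ht' : t - β * ρ ≠ 0 := sub_ne_zero.mpr ht
  have hfac : t • (1 : Matrix n n ℝ) - β • M - k • onesMatrix n n =
      (t • (1 : Matrix n n ℝ) - β • M) * (1 - (k / (t - β * ρ)) • onesMatrix n n) := by
    have hJ : (t • (1 : Matrix n n ℝ) - β • M) * onesMatrix n n =
        (t - β * ρ) • onesMatrix n n := by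
      have : M * onesMatrix n n = ρ • onesMatrix n n := by
        ext i j; simp [Matrix.mul_apply, hM]
      rw [Matrix.sub_mul, Matrix.smul_mul, Matrix.smul_mul, this, Matrix.one_mul, smul_smul,
        sub_smul]
    rw [Matrix.mul_sub, Matrix.mul_one, Matrix.mul_smul, hJ, smul_smul, div_mul_cancel₀ _ ht']
  have hprod : ∏ i, (t - β * μ i) =
      (t - β * ρ) * ∏ i ∈ Finset.univ.filter (· ≠ i₀), (t - β * μ i) := by
    rw [Finset.filter_ne', ← h₀]
    exact (Finset.mul_prod_erase _ (fun i => t - β * μ i) (Finset.mem_univ i₀)).symm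
  change (t • (1 : Matrix n n ℝ) - β • M - k • onesMatrix n n).det = _
  rw [hfac, Matrix.det_mul, hscale, det_one_sub_smul_ones, hprod]
  field_simp

/-- The block matrix with diagonal blocks `a • 1`, `b • 1`, `D`, in which `-β • R` links the first
two blocks and a constant matrix links the last two. -/
def joinBlocks {V E W : Type*} [DecidableEq V] [DecidableEq E]
    (R : Matrix V E ℝ) (D : Matrix W W ℝ) (a b β : ℝ) :
    Matrix (V ⊕ (E ⊕ W)) (V ⊕ (E ⊕ W)) ℝ :=
  Matrix.fromBlocks (a • 1) (Matrix.fromCols (-β • R) 0) (Matrix.fromRows (-β • Rᵀ) 0)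
    (Matrix.fromBlocks (b • 1) (-β • onesMatrix E W) (-β • onesMatrix W E) D)

lemma continuous_joinBlocks {V E W : Type*} [DecidableEq V] [DecidableEq E]
    (R : Matrix V E ℝ) (D : Matrix W W ℝ) (β : ℝ) {f g : ℝ → ℝ} (hf : Continuous f)
    (hg : Continuous g) : Continuous fun s => joinBlocks R D (f s) (g s) β :=
  Continuous.matrix_fromBlocks (by fun_prop) continuous_const continuous_const
    (Continuous.matrix_fromBlocks (by fun_prop) continuous_const continuous_const continuous_const)

lemma det_joinBlocks {V E W : Type*} [Fintype V] [Fintype E] [Fintype W]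
    [DecidableEq V] [DecidableEq E] [DecidableEq W]
    (R : Matrix V E ℝ) (r : ℝ) (hrow : ∀ v, ∑ e, R v e = r) (hcol : ∀ e, ∑ v, R v e = 2)
    (D : Matrix W W ℝ) (hD : D.det ≠ 0) (a b β : ℝ) :
    b ^ Fintype.card V * (joinBlocks R D a b β).det =
      b ^ Fintype.card E * D.det * ((a * b) • (1 : Matrix V V ℝ) - β ^ 2 • (R * Rᵀ) -
        (a * (β ^ 2 * ∑ i, ∑ j, D⁻¹ i j) * r / 2) • onesMatrix V V).det := by
  set c : ℝ := β ^ 2 * ∑ i, ∑ j, D⁻¹ i j with hc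
  have hJD : (-β • onesMatrix E W) * D⁻¹ * (-β • onesMatrix W E) = c • onesMatrix E E := by
    ext i j
    have hswap : ∑ i, ∑ j, D⁻¹ i j = ∑ j, ∑ i, D⁻¹ i j := Finset.sum_comm
    simp only [Matrix.smul_mul, Matrix.smul_apply, Matrix.mul_apply,
      onesMatrix_apply, smul_eq_mul, one_mul, mul_one, hc, hswap, ← Finset.mul_sum,
      ← Finset.sum_mul]
    ring
  have hgen : ∀ a b : ℝ, a ≠ 0 → b ≠ 0 →
      b ^ Fintype.card V * (joinBlocks R D a b β).det =
      b ^ Fintype.card E * D.det * ((a * b) • (1 : Matrix V V ℝ) - β ^ 2 • (R * Rᵀ) -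
        (a * c * r / 2) • onesMatrix V V).det := by
    intro a b ha hb
    have hinv : (a • (1 : Matrix V V ℝ)) * (a⁻¹ • (1 : Matrix V V ℝ)) = 1 := by
      simp [smul_smul, ha]
    let _ : Invertible (a • (1 : Matrix V V ℝ)) :=
      invertibleOfRightInverse _ (a⁻¹ • (1 : Matrix V V ℝ)) hinv
    let _ : Invertible D := Matrix.invertibleOfIsUnitDet D (isUnit_iff_ne_zero.mpr hD)
    have hia : ⅟(a • (1 : Matrix V V ℝ)) = a⁻¹ • (1 : Matrix V V ℝ) :=
      invOf_eq_right_inv hinv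
    have hschur : Matrix.fromRows (-β • Rᵀ) (0 : Matrix W V ℝ) * (a⁻¹ • (1 : Matrix V V ℝ)) *
        Matrix.fromCols (-β • R) (0 : Matrix V W ℝ) =
        Matrix.fromBlocks ((a⁻¹ * β ^ 2) • (Rᵀ * R)) 0 0 0 := by
      rw [Matrix.mul_smul, Matrix.mul_one, Matrix.smul_mul, Matrix.fromRows_mul_fromCols,
        Matrix.fromBlocks_smul]
      simp [smul_smul, sq]
    set N : Matrix V V ℝ := β ^ 2 • (1 : Matrix V V ℝ) + (a * c / 4) • onesMatrix V V with hN
    have hRNR : Rᵀ * (N * R) = β ^ 2 • (Rᵀ * R) + (a * c) • onesMatrix E E := by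
      have h1 : Rᵀ * (onesMatrix V V * R) = (4 : ℝ) • onesMatrix E E := by
        ext i j
        simp only [Matrix.mul_apply, Matrix.transpose_apply, onesMatrix_apply, one_mul, hcol,
          ← Finset.sum_mul, Matrix.smul_apply, smul_eq_mul]
        norm_num
      rw [hN, Matrix.add_mul, Matrix.mul_add, Matrix.smul_mul, Matrix.smul_mul, Matrix.mul_smul,
        Matrix.mul_smul, h1, Matrix.one_mul, smul_smul]
      congr 2; ring
    have hNRR : N * R * Rᵀ = β ^ 2 • (R * Rᵀ) + (a * c * r / 2) • onesMatrix V V := by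
      have h1 : onesMatrix V V * R * Rᵀ = (2 * r) • onesMatrix V V := by
        ext i j
        simp only [Matrix.mul_apply, Matrix.transpose_apply, onesMatrix_apply, one_mul, hcol,
          ← Finset.mul_sum, Matrix.smul_apply, smul_eq_mul, hrow]
        ring
      rw [hN, Matrix.add_mul, Matrix.add_mul, Matrix.smul_mul, Matrix.smul_mul, Matrix.smul_mul,
        Matrix.smul_mul, h1, Matrix.one_mul, smul_smul]
      congr 2; ring
    have hE : b • (1 : Matrix E E ℝ) - (a⁻¹ * β ^ 2) • (Rᵀ * R) - c • onesMatrix E E =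
        a⁻¹ • ((a * b) • (1 : Matrix E E ℝ) - Rᵀ * (N * R)) := by
      rw [hRNR, smul_sub, smul_add, smul_smul, smul_smul, smul_smul, ← mul_assoc, ← mul_assoc,
        inv_mul_cancel₀ ha, one_mul, one_mul, sub_sub]
    have hcomm := det_smul_one_sub_mul_comm (N * R) Rᵀ (a * b)
    rw [hNRR, ← sub_sub] at hcomm
    have hsub : Matrix.fromBlocks (b • (1 : Matrix E E ℝ)) (-β • onesMatrix E W)
          (-β • onesMatrix W E) D - Matrix.fromBlocks ((a⁻¹ * β ^ 2) • (Rᵀ * R)) 0 0 0 =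
        Matrix.fromBlocks (b • (1 : Matrix E E ℝ) - (a⁻¹ * β ^ 2) • (Rᵀ * R))
          (-β • onesMatrix E W) (-β • onesMatrix W E) D := by
      ext (i | i) (j | j) <;> simp
    rw [joinBlocks, Matrix.det_fromBlocks₁₁, hia, hschur, hsub, Matrix.det_fromBlocks₂₂,
      Matrix.invOf_eq_nonsing_inv, hJD, hE, Matrix.det_smul, Matrix.det_smul, Matrix.det_one,
      inv_pow]
    rw [mul_pow, mul_pow] at hcomm
    field_simp
    linear_combination -hcomm
  have hcont : Continuous fun s => (b + s) ^ Fintype.card V *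
      (joinBlocks R D (a + s) (b + s) β).det := by
    refine Continuous.mul (by fun_prop) (Continuous.matrix_det ?_)
    exact continuous_joinBlocks R D β (by fun_prop) (by fun_prop)
  have h0 := eq_of_continuous_of_finite_compl hcont
    (g := fun s => (b + s) ^ Fintype.card E * D.det *
      (((a + s) * (b + s)) • (1 : Matrix V V ℝ) - β ^ 2 • (R * Rᵀ) -
        ((a + s) * c * r / 2) • onesMatrix V V).det)
    (by fun_prop) (Set.toFinite {-a, -b})
    (fun s hs => by
      simp only [Set.mem_insert_iff, Set.mem_singleton_iff, not_or] at hs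
      exact hgen _ _ (fun h => hs.1 (by linarith)) (fun h => hs.2 (by linarith))) 0
  simpa only [add_zero] using h0

lemma coronal_eq {n : Type*} [Fintype n] [DecidableEq n] (M : Matrix n n ℝ) (x : ℝ) :
    coronal M x = ∑ i, ∑ j, (x • (1 : Matrix n n ℝ) - M)⁻¹ i j := by
  unfold coronal
  congr!

/-- The incidence matrix of `G` with columns restricted to the edges of `G`. -/
def edgeIncMatrix {V : Type*} (G : SimpleGraph V) : Matrix V G.edgeSet ℝ :=
  Matrix.of fun v e => if v ∈ (e : Sym2 V) then 1 else 0

lemma edgeIncMatrix_eq_incMatrix {V : Type*} [DecidableEq V] (G : SimpleGraph V) (v : V) (e : G.edgeSet) :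
    edgeIncMatrix G v e = G.incMatrix ℝ v e := by
  simp [edgeIncMatrix, SimpleGraph.incMatrix_apply', SimpleGraph.incidenceSet, e.2]

section Incidence

variable {V : Type*} [Fintype V] (G : SimpleGraph V)

lemma sum_edgeSet_eq_sum_of_notMem [Fintype G.edgeSet] (f : Sym2 V → ℝ)
    (hf : ∀ e ∉ G.edgeSet, f e = 0) : ∑ e : G.edgeSet, f e = ∑ e, f e := by
  rw [← Finset.sum_subset (Finset.subset_univ G.edgeSet.toFinset)
    (fun e _ he => hf e (by simpa using he))]
  exact (Finset.sum_subtype _ (fun e => Set.mem_toFinset) f).symm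

lemma sum_edgeIncMatrix_row [Fintype G.edgeSet] (v : V) :
    ∑ e, edgeIncMatrix G v e = G.degree v := by
  simp_rw [edgeIncMatrix_eq_incMatrix]
  rw [sum_edgeSet_eq_sum_of_notMem G (fun e => G.incMatrix ℝ v e)
    (fun e he => SimpleGraph.incMatrix_of_notMem_incidenceSet G fun h => he h.1),
    SimpleGraph.sum_incMatrix_apply]

lemma sum_edgeIncMatrix_col (e : G.edgeSet) : ∑ v, edgeIncMatrix G v e = 2 := by
  simp_rw [edgeIncMatrix_eq_incMatrix]
  exact SimpleGraph.sum_incMatrix_apply_of_mem_edgeSet G e.2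

lemma edgeIncMatrix_mul_transpose [Fintype G.edgeSet] [DecidableEq V] {r : ℕ}
    (hr : G.IsRegularOfDegree r) :
    edgeIncMatrix G * (edgeIncMatrix G)ᵀ = (r : ℝ) • (1 : Matrix V V ℝ) + G.adjMatrix ℝ := by
  have h : edgeIncMatrix G * (edgeIncMatrix G)ᵀ = G.incMatrix ℝ * (G.incMatrix ℝ)ᵀ := by
    ext v w
    simp only [Matrix.mul_apply, Matrix.transpose_apply, edgeIncMatrix_eq_incMatrix]
    exact sum_edgeSet_eq_sum_of_notMem G (fun e => G.incMatrix ℝ v e * G.incMatrix ℝ w e)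
      fun e he => by
        rw [SimpleGraph.incMatrix_of_notMem_incidenceSet G fun h => he h.1, zero_mul]
  rw [h, SimpleGraph.incMatrix_mul_transpose]
  ext v w
  rcases eq_or_ne v w with rfl | hvw
  · simp [hr.degree_eq v]
  · simp [hvw, SimpleGraph.adjMatrix_apply]

lemma Aalpha_of_isRegularOfDegree [DecidableEq V] {r : ℕ} (hr : G.IsRegularOfDegree r) (α : ℝ) :
    Aalpha G α = (α * r) • (1 : Matrix V V ℝ) + (1 - α) • G.adjMatrix ℝ := by
  ext v w
  rcases eq_or_ne v w with rfl | hvw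
  · simp [Aalpha, hr.degree_eq v]
  · simp [Aalpha, hvw]

lemma cast_degree_eq_sum_adjMatrix (v : V) : (G.degree v : ℝ) = ∑ w, G.adjMatrix ℝ v w := by
  rw [← SimpleGraph.card_neighborFinset_eq_degree, SimpleGraph.neighborFinset_eq_filter]
  simp [SimpleGraph.adjMatrix_apply]

lemma sum_Aalpha_row {r : ℕ} (hr : G.IsRegularOfDegree r) (α : ℝ) (v : V) :
    ∑ w, Aalpha G α v w = r := by
  have h := cast_degree_eq_sum_adjMatrix G v
  rw [hr.degree_eq v] at h
  simp only [Aalpha_of_isRegularOfDegree G hr, Matrix.add_apply, Matrix.smul_apply, smul_eq_mul,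
    Finset.sum_add_distrib, ← Finset.mul_sum, ← h]
  simp [Matrix.one_apply]
  ring

end Incidence

section Join

variable {V₁ V₂ : Type*} (G₁ : SimpleGraph V₁) (G₂ : SimpleGraph V₂)

lemma adjMatrix_subdivisionEdgeJoin :
    (subdivisionEdgeJoin G₁ G₂).adjMatrix ℝ =
      Matrix.fromBlocks 0 (Matrix.fromCols (edgeIncMatrix G₁) 0)
        (Matrix.fromRows (edgeIncMatrix G₁)ᵀ 0)
        (Matrix.fromBlocks 0 (onesMatrix _ _) (onesMatrix _ _) (G₂.adjMatrix ℝ)) := by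
  ext (v | e | u) (w | f | t) <;> rw [SimpleGraph.adjMatrix_apply] <;>
    simp [subdivisionEdgeJoin, SimpleGraph.fromRel_adj, edgeIncMatrix, SimpleGraph.adjMatrix_apply]
  exact if_congr ⟨fun h => h.2.elim id .symm, fun h => ⟨h.ne, .inl h⟩⟩ rfl rfl

variable [Fintype V₁] [Fintype V₂] [Fintype G₁.edgeSet] [DecidableEq V₁]
  [DecidableEq V₂] [DecidableEq G₁.edgeSet]

lemma smul_one_sub_Aalpha_subdivisionEdgeJoin {r : ℕ} (hr : G₁.IsRegularOfDegree r) (α x : ℝ) :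
    x • (1 : Matrix (V₁ ⊕ (G₁.edgeSet ⊕ V₂)) _ ℝ) - Aalpha (subdivisionEdgeJoin G₁ G₂) α =
      joinBlocks (edgeIncMatrix G₁)
        ((x - α * Fintype.card G₁.edgeSet) • (1 : Matrix V₂ V₂ ℝ) - Aalpha G₂ α)
        (x - α * r) (x - α * (2 + Fintype.card V₂)) (1 - α) := by
  have hdeg := cast_degree_eq_sum_adjMatrix (subdivisionEdgeJoin G₁ G₂)
  have hadj := adjMatrix_subdivisionEdgeJoin G₁ G₂
  have hV (v : V₁) : ((subdivisionEdgeJoin G₁ G₂).degree (Sum.inl v) : ℝ) = r := by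
    rw [hdeg, hadj]
    simp [sum_edgeIncMatrix_row, hr.degree_eq v]
  have hE (e : G₁.edgeSet) :
      ((subdivisionEdgeJoin G₁ G₂).degree (Sum.inr (Sum.inl e)) : ℝ) =
        2 + Fintype.card V₂ := by
    rw [hdeg, hadj]
    simp [sum_edgeIncMatrix_col]
  have hW (u : V₂) :
      ((subdivisionEdgeJoin G₁ G₂).degree (Sum.inr (Sum.inr u)) : ℝ) =
        Fintype.card G₁.edgeSet + G₂.degree u := by
    rw [hdeg, hadj, cast_degree_eq_sum_adjMatrix G₂ u]
    simp
  rw [Aalpha, hadj, joinBlocks]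
  ext (v | e | u) (w | f | t) <;>
    simp [Matrix.one_apply, Matrix.diagonal_apply, hV, hE, hW, Aalpha]
  all_goals try split_ifs
  all_goals ring

/-- The determinant of `joinBlocks` for the incidence matrix of a regular graph whose
`A_α`-eigenvalues are the `μ i`. -/
lemma pow_mul_det_joinBlocks_edgeIncMatrix {r : ℕ} (hr : G₁.IsRegularOfDegree r) (α : ℝ)
    (μ : V₁ → ℝ) (i₀ : V₁) (h₀ : μ i₀ = r)
    (hμ : ∀ t : ℝ, (t • (1 : Matrix V₁ V₁ ℝ) - Aalpha G₁ α).det = ∏ i, (t - μ i))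
    (D : Matrix V₂ V₂ ℝ) (hD : D.det ≠ 0) (a b : ℝ) :
    b ^ Fintype.card V₁ * (joinBlocks (edgeIncMatrix G₁) D a b (1 - α)).det =
      b ^ Fintype.card G₁.edgeSet * D.det *
        ((a * b - 2 * r * (1 - α) ^ 2 -
            Fintype.card V₁ * r / 2 * (1 - α) ^ 2 * a * ∑ i, ∑ j, D⁻¹ i j) *
          ∏ i ∈ Finset.univ.filter (· ≠ i₀),
            (a * b + r * (1 - α) * (2 * α - 1) - (1 - α) * μ i)) := by
  have hmat : ∀ k : ℝ, (a * b) • (1 : Matrix V₁ V₁ ℝ) -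
      (1 - α) ^ 2 • (edgeIncMatrix G₁ * (edgeIncMatrix G₁)ᵀ) - k • onesMatrix V₁ V₁ =
      (a * b + r * (1 - α) * (2 * α - 1)) • (1 : Matrix V₁ V₁ ℝ) - (1 - α) • Aalpha G₁ α -
        k • onesMatrix V₁ V₁ := by
    intro k
    rw [edgeIncMatrix_mul_transpose G₁ hr, Aalpha_of_isRegularOfDegree G₁ hr]
    module
  rw [det_joinBlocks (edgeIncMatrix G₁) r (fun v => by rw [sum_edgeIncMatrix_row, hr.degree_eq v])
    (sum_edgeIncMatrix_col G₁) D hD, hmat, det_smul_one_sub_smul_sub_smul_ones (Aalpha G₁ α) r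
    (sum_Aalpha_row G₁ hr α) μ i₀ h₀ hμ]
  congr 2
  ring

end Join

/-- The largest `A_α`-eigenvalue of an `r`-regular graph is `r`. -/
lemma eigenvalue_zero_eq_of_isRegularOfDegree {n r : ℕ} (G : SimpleGraph (Fin n))
    (hr : G.IsRegularOfDegree r) {α : ℝ} (hα : α ∈ Set.Icc (0 : ℝ) 1) {μ : Fin n → ℝ}
    (hμ : Antitone μ)
    (hμch : ∀ t : ℝ, (t • (1 : Matrix (Fin n) (Fin n) ℝ) - Aalpha G α).det = ∏ i, (t - μ i))
    (i₀ : Fin n) (hi₀ : i₀.val = 0) : μ i₀ = r := by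
  have hker : ∀ {t : ℝ} {v : Fin n → ℝ},
      (t • (1 : Matrix (Fin n) (Fin n) ℝ) - Aalpha G α) *ᵥ v = 0 ↔ Aalpha G α *ᵥ v = t • v := by
    intro t v
    rw [Matrix.sub_mulVec, Matrix.smul_mulVec, Matrix.one_mulVec, sub_eq_zero, eq_comm]
  obtain ⟨i, hi⟩ : ∃ i, μ i = r := by
    have hdet : ((r : ℝ) • (1 : Matrix (Fin n) (Fin n) ℝ) - Aalpha G α).det = 0 := by
      refine Matrix.exists_mulVec_eq_zero_iff.mp ⟨fun _ => 1, ?_, hker.mpr ?_⟩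
      · exact fun h => one_ne_zero (congrFun h i₀)
      · ext j
        simpa [Matrix.mulVec, dotProduct] using sum_Aalpha_row G hr α j
    rw [hμch, Finset.prod_eq_zero_iff] at hdet
    obtain ⟨i, -, hi⟩ := hdet
    exact ⟨i, (sub_eq_zero.mp hi).symm⟩
  refine le_antisymm ?_ (hi ▸ hμ (Fin.le_def.mpr (by omega)))
  have hdet : (μ i₀ • (1 : Matrix (Fin n) (Fin n) ℝ) - Aalpha G α).det = 0 := by
    rw [hμch, Finset.prod_eq_zero (Finset.mem_univ i₀) (sub_self _)]
  obtain ⟨v, hv, hv0⟩ := Matrix.exists_mulVec_eq_zero_iff.mpr hdet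
  obtain ⟨k, hk⟩ := eigenvalue_mem_ball (K := ℝ) (A := Aalpha G α) (μ := μ i₀)
    (Module.End.hasEigenvalue_of_hasEigenvector (x := v)
      ⟨Module.End.mem_eigenspace_iff.mpr (hker.mp hv0), hv⟩)
  have hnonneg : ∀ j ∈ Finset.univ.erase k, ‖Aalpha G α k j‖ = Aalpha G α k j := by
    intro j hj
    have hkj : k ≠ j := (Finset.ne_of_mem_erase hj).symm
    refine Real.norm_of_nonneg ?_
    rw [Aalpha_of_isRegularOfDegree G hr, Matrix.add_apply, Matrix.smul_apply, Matrix.smul_apply,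
      Matrix.one_apply_ne hkj, SimpleGraph.adjMatrix_apply, smul_zero, zero_add]
    exact mul_nonneg (by linarith [hα.2]) (by split_ifs <;> norm_num)
  rw [Finset.sum_congr rfl hnonneg, Metric.mem_closedBall, Real.dist_eq] at hk
  have hrow := sum_Aalpha_row G hr α k
  rw [← Finset.add_sum_erase _ _ (Finset.mem_univ k)] at hrow
  linarith [le_abs_self (μ i₀ - Aalpha G α k k)]

/-- Theorem 4.1: the `A_α`-characteristic polynomial of the subdivision-edge join
`G₁ ∨̲ G₂` of an `r₁`-regular graph `G₁` (on `n₁` vertices and `m₁` edges) and an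
arbitrary graph `G₂` (on `n₂` vertices), in the cases `r₁ = 1` and `r₁ ≥ 2`. -/
theorem Aalpha_charpoly_subdivisionEdgeJoin
    {n₁ m₁ n₂ r₁ : ℕ} (G₁ : SimpleGraph (Fin n₁)) (G₂ : SimpleGraph (Fin n₂))
    (hconn : G₁.Connected) (hreg : G₁.IsRegularOfDegree r₁)
    (hm : Fintype.card G₁.edgeSet = m₁)
    (α : ℝ) (hα : α ∈ Set.Icc (0 : ℝ) 1)
    (μ : Fin n₁ → ℝ) (hμ : Antitone μ)
    (hμch : (Aalpha G₁ α).charpoly = ∏ i, (X - C (μ i))) :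
    (r₁ = 1 → ∀ x : ℝ,
      ((x - α) • (1 : Matrix (Fin n₂) (Fin n₂) ℝ) - Aalpha G₂ α).det ≠ 0 →
      ((Aalpha (subdivisionEdgeJoin G₁ G₂) α).charpoly).eval x =
        (x - α) * ((Aalpha G₂ α).charpoly).eval (x - α) *
          (x ^ 2 - α * (3 + n₂) * x + (α ^ 2 * n₂ + 4 * α - 2)
            - (1 - α) ^ 2 * (x - α) * coronal (Aalpha G₂ α) (x - α))) ∧
    (2 ≤ r₁ → ∀ x : ℝ,
      ((x - α * m₁) • (1 : Matrix (Fin n₂) (Fin n₂) ℝ) - Aalpha G₂ α).det ≠ 0 →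
      ((Aalpha (subdivisionEdgeJoin G₁ G₂) α).charpoly).eval x =
        (x - 2 * α - α * n₂) ^ (m₁ - n₁) *
          ((Aalpha G₂ α).charpoly).eval (x - α * m₁) *
          (x ^ 2 - α * (2 + r₁ + n₂) * x + r₁ * (α ^ 2 * n₂ + 4 * α - 2)
            - m₁ * (1 - α) ^ 2 * (x - α * r₁) * coronal (Aalpha G₂ α) (x - α * m₁)) *
          (∏ i ∈ Finset.univ.filter (fun i : Fin n₁ => i.val ≠ 0),
            (x ^ 2 - α * (2 + r₁ + n₂) * x + r₁ * (α ^ 2 * n₂ + 3 * α - 1)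
              - (1 - α) * μ i))) := by
  subst hm
  obtain ⟨v₀⟩ := hconn.nonempty
  have hn₁ : 0 < n₁ := v₀.pos
  set i₀ : Fin n₁ := ⟨0, hn₁⟩ with hi₀
  have heval : ∀ t : ℝ,
      (t • (1 : Matrix (Fin n₁) (Fin n₁) ℝ) - Aalpha G₁ α).det = ∏ i, (t - μ i) := by
    intro t
    have h := congrArg (Polynomial.eval t) hμch
    simpa [Matrix.eval_charpoly, Matrix.smul_one_eq_diagonal, Polynomial.eval_prod] using h
  have h₀ := eigenvalue_zero_eq_of_isRegularOfDegree G₁ hreg hα hμ heval i₀ rfl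
  have hfilter : Finset.univ.filter (fun i : Fin n₁ => i.val ≠ 0) =
      Finset.univ.filter (· ≠ i₀) := by
    ext i; simp [hi₀, Fin.ext_iff]
  have hsum : n₁ * r₁ = 2 * Fintype.card G₁.edgeSet := by
    have h := G₁.sum_degrees_eq_twice_card_edges
    rw [Finset.sum_congr rfl fun v _ => hreg.degree_eq v, SimpleGraph.edgeFinset_card] at h
    simpa using h
  have hsum' : (n₁ : ℝ) * r₁ / 2 = Fintype.card G₁.edgeSet := by
    rw [div_eq_iff two_ne_zero, mul_comm (Fintype.card G₁.edgeSet : ℝ)]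
    exact_mod_cast hsum
  have hjoin : ∀ x : ℝ, (Aalpha (subdivisionEdgeJoin G₁ G₂) α).charpoly.eval x =
      (joinBlocks (edgeIncMatrix G₁)
        ((x - α * Fintype.card G₁.edgeSet) • (1 : Matrix (Fin n₂) (Fin n₂) ℝ) - Aalpha G₂ α)
        (x - α * r₁) (x - α * (2 + n₂)) (1 - α)).det := by
    intro x
    have h := smul_one_sub_Aalpha_subdivisionEdgeJoin G₁ G₂ hreg α x
    rw [Fintype.card_fin] at h
    rw [← h, Matrix.eval_charpoly, Matrix.smul_one_eq_diagonal]
    rfl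
  have hψ : ∀ t : ℝ, (Aalpha G₂ α).charpoly.eval t =
      (t • (1 : Matrix (Fin n₂) (Fin n₂) ℝ) - Aalpha G₂ α).det := by
    intro t
    rw [Matrix.eval_charpoly, Matrix.smul_one_eq_diagonal]
    rfl
  constructor
  · rintro rfl x hx
    have hcard := hconn.card_vert_le_card_edgeSet_add_one
    simp only [Nat.card_eq_fintype_card, Fintype.card_fin] at hcard
    obtain rfl : n₁ = 2 := by omega
    have hm : Fintype.card G₁.edgeSet = 1 := by omega
    have hμ₁ : μ 1 = 2 * α - 1 := by
      have htr : (Aalpha G₁ α).trace = 2 * α := by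
        rw [Aalpha_of_isRegularOfDegree G₁ hreg]
        simp [Matrix.trace_smul, mul_comm]
      have h := Matrix.charpoly_fin_two (Aalpha G₁ α)
      rw [hμch, htr, Fin.prod_univ_two] at h
      have hpos := congrArg (Polynomial.eval 1) h
      have hneg := congrArg (Polynomial.eval (-1)) h
      simp at hpos hneg
      have h₀' : μ 0 = 1 := h₀.trans Nat.cast_one
      rw [h₀'] at hpos hneg
      linarith
    have hsingle : Finset.univ.filter (· ≠ i₀) = {1} := by
      ext i; fin_cases i <;> simp [hi₀]
    rw [hjoin, hψ, coronal_eq]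
    simp only [hm, Nat.cast_one, mul_one] at hx ⊢
    set D := (x - α) • (1 : Matrix (Fin n₂) (Fin n₂) ℝ) - Aalpha G₂ α
    have hoff := fun b : ℝ =>
      pow_mul_det_joinBlocks_edgeIncMatrix G₁ hreg α μ i₀ h₀ heval D hx (x - α) b
    rw [Fintype.card_fin, hsum', hm, hsingle] at hoff
    simp only [Finset.prod_singleton, hμ₁, Nat.cast_one, mul_one, one_mul, pow_one] at hoff
    have h := eq_of_continuous_of_finite_compl
      (f := fun b => (joinBlocks (edgeIncMatrix G₁) D (x - α) b (1 - α)).det)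
      (g := fun b => (x - α) * D.det * ((x - α) * b - 2 * (1 - α) ^ 2 -
        (1 - α) ^ 2 * (x - α) * ∑ i, ∑ j, D⁻¹ i j))
      (continuous_joinBlocks _ _ _ continuous_const continuous_id).matrix_det (by fun_prop)
      (Set.finite_singleton 0)
      (fun b hb => mul_left_cancel₀ (pow_ne_zero 2 hb) <| (hoff b).trans <| by ring)
      (x - α * (2 + n₂))
    refine h.trans ?_
    ring
  · intro hr x hx
    have hle : n₁ ≤ Fintype.card G₁.edgeSet := by nlinarith
    rw [hjoin, hψ, hfilter, coronal_eq]
    set D := (x - α * Fintype.card G₁.edgeSet) • (1 : Matrix (Fin n₂) (Fin n₂) ℝ) - Aalpha G₂ α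
    have hoff := fun b : ℝ =>
      pow_mul_det_joinBlocks_edgeIncMatrix G₁ hreg α μ i₀ h₀ heval D hx (x - α * r₁) b
    rw [Fintype.card_fin, hsum'] at hoff
    have h := eq_of_continuous_of_finite_compl
      (f := fun b => (joinBlocks (edgeIncMatrix G₁) D (x - α * r₁) b (1 - α)).det)
      (g := fun b => b ^ (Fintype.card G₁.edgeSet - n₁) * D.det *
        (((x - α * r₁) * b - 2 * r₁ * (1 - α) ^ 2 -
            Fintype.card G₁.edgeSet * (1 - α) ^ 2 * (x - α * r₁) * ∑ i, ∑ j, D⁻¹ i j) *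
          ∏ i ∈ Finset.univ.filter (· ≠ i₀),
            ((x - α * r₁) * b + r₁ * (1 - α) * (2 * α - 1) - (1 - α) * μ i)))
      (continuous_joinBlocks _ _ _ continuous_const continuous_id).matrix_det (by fun_prop)
      (Set.finite_singleton 0)
      (fun b hb => mul_left_cancel₀ (pow_ne_zero n₁ hb) <| (hoff b).trans <| by
        rw [← pow_sub_mul_pow b hle]; ring) (x - α * (2 + n₂))
    refine h.trans ?_
    rw [← mul_assoc]
    congr 1
    · ring
    · exact Finset.prod_congr rfl fun i _ => by ring
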